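/- For |p|<1 and nonzero complex numbers x, y, w, z, the Riemann addition relation holds: θ(xw;p)θ(x/w;p)θ(yz;p)θ(y/z;p) − θ(xz;p)θ(x/z;p)θ(yw;p)θ(y/w;p) = (y/w)·θ(xy;p)θ(x/y;p)θ(wz;p)θ(w/z;p). -/

import Mathlib

noncomputable def qPochhammerInf (z q : ℂ) : ℂ := ∏' j : ℕ, (1 - z * q ^ j)

noncomputable def theta (z p : ℂ) : ℂ :=
  ∏' j : ℕ, (1 - z * p ^ j) * (1 - p ^ (j + 1) * z⁻¹)

noncomputable def ellGamma (z p q : ℂ) : ℂ :=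
  ∏' jk : ℕ × ℕ,
    (1 - z⁻¹ * p ^ (jk.1 + 1) * q ^ (jk.2 + 1)) / (1 - z * p ^ jk.1 * q ^ jk.2)

open Filter Topology

/-- The general term of the bilateral series `∑ q ^ (n(n-1)/2) u ^ n`. -/
noncomputable def bilateralTerm (q u : ℂ) (n : ℤ) : ℂ := q ^ (n * (n - 1) / 2) * u ^ n

/-- The bilateral series `∑ q ^ (n(n-1)/2) u ^ n`. -/
noncomputable def bilateralSum (q u : ℂ) : ℂ := ∑' n : ℤ, bilateralTerm q u n

theorem two_mul_int_mul_pred_div_two (n : ℤ) : 2 * (n * (n - 1) / 2) = n * (n - 1) :=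
  Int.mul_ediv_cancel' (Int.even_mul_pred_self n).two_dvd

theorem bilateralTerm_ne_zero {q u : ℂ} (hq : q ≠ 0) (hu : u ≠ 0) (n : ℤ) : bilateralTerm q u n ≠ 0 :=
  mul_ne_zero (zpow_ne_zero _ hq) (zpow_ne_zero _ hu)

theorem bilateralTerm_add_one {q u : ℂ} (hq : q ≠ 0) (hu : u ≠ 0) (n : ℤ) :
    bilateralTerm q u (n + 1) = q ^ n * u * bilateralTerm q u n := by
  have h : (n + 1) * (n + 1 - 1) / 2 = n * (n - 1) / 2 + n := by
    have h₁ := two_mul_int_mul_pred_div_two (n + 1)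
    have h₂ := two_mul_int_mul_pred_div_two n
    linarith
  rw [bilateralTerm, bilateralTerm, h, zpow_add₀ hq, zpow_add_one₀ hu]
  ring

theorem bilateralTerm_neg {q u : ℂ} (hq : q ≠ 0) (n : ℤ) :
    bilateralTerm q u (-n) = bilateralTerm q (q / u) n := by
  have h : -n * (-n - 1) / 2 = n * (n - 1) / 2 + n := by
    have h₁ := two_mul_int_mul_pred_div_two (-n)
    have h₂ := two_mul_int_mul_pred_div_two n
    linarith
  rw [bilateralTerm, bilateralTerm, h, zpow_add₀ hq, div_zpow, zpow_neg]
  ring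

theorem summable_bilateralTerm_nat {q u : ℂ} (hq : q ≠ 0) (hq1 : ‖q‖ < 1) (hu : u ≠ 0) :
    Summable fun n : ℕ => bilateralTerm q u n := by
  refine summable_of_ratio_test_tendsto_lt_one zero_lt_one
    (Eventually.of_forall fun n => bilateralTerm_ne_zero hq hu _) ?_
  have h : Tendsto (fun n : ℕ => ‖q‖ ^ n * ‖u‖) atTop (𝓝 0) := by
    simpa using (tendsto_pow_atTop_nhds_zero_of_lt_one (norm_nonneg q) hq1).mul_const ‖u‖
  refine h.congr fun n => ?_
  have := norm_ne_zero_iff.mpr (bilateralTerm_ne_zero hq hu n)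
  rw [Nat.cast_add_one, bilateralTerm_add_one hq hu, norm_mul, norm_mul, zpow_natCast, norm_pow]
  field_simp

theorem summable_bilateralTerm {q u : ℂ} (hq : q ≠ 0) (hq1 : ‖q‖ < 1) (hu : u ≠ 0) :
    Summable (bilateralTerm q u) := by
  refine Summable.of_nat_of_neg (summable_bilateralTerm_nat hq hq1 hu) ?_
  simpa only [bilateralTerm_neg hq] using summable_bilateralTerm_nat hq hq1 (div_ne_zero hq hu)

theorem bilateralTerm_mul_even {q u v : ℂ} (hq : q ≠ 0) (hu : u ≠ 0) (hv : v ≠ 0) (a b : ℤ) :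
    bilateralTerm q u (a + b) * bilateralTerm q v (a - b) =
      bilateralTerm (q ^ 2) (u * v) a * bilateralTerm (q ^ 2) (q * (u / v)) b := by
  have h : (a + b) * (a + b - 1) / 2 + (a - b) * (a - b - 1) / 2 =
      2 * (a * (a - 1) / 2) + 2 * (b * (b - 1) / 2) + b := by
    have h₁ := two_mul_int_mul_pred_div_two (a + b)
    have h₂ := two_mul_int_mul_pred_div_two (a - b)
    have h₃ := two_mul_int_mul_pred_div_two a
    have h₄ := two_mul_int_mul_pred_div_two b
    linarith
  have e := congrArg (q ^ ·) h
  simp only [zpow_add₀ hq, zpow_mul, zpow_ofNat] at e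
  simp only [bilateralTerm, mul_zpow, div_zpow, zpow_add₀ hu, zpow_sub₀ hv]
  linear_combination (u ^ a * u ^ b * v ^ a / v ^ b) * e

theorem bilateralTerm_mul_odd {q u v : ℂ} (hq : q ≠ 0) (hu : u ≠ 0) (hv : v ≠ 0) (a b : ℤ) :
    bilateralTerm q u (a + b) * bilateralTerm q v (a + 1 - b) =
      v * (bilateralTerm (q ^ 2) (q * (u * v)) a * bilateralTerm (q ^ 2) (u / v) b) := by
  have h : (a + b) * (a + b - 1) / 2 + (a + 1 - b) * (a + 1 - b - 1) / 2 =
      2 * (a * (a - 1) / 2) + 2 * (b * (b - 1) / 2) + a := by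
    have h₁ := two_mul_int_mul_pred_div_two (a + b)
    have h₂ := two_mul_int_mul_pred_div_two (a + 1 - b)
    have h₃ := two_mul_int_mul_pred_div_two a
    have h₄ := two_mul_int_mul_pred_div_two b
    linarith
  have e := congrArg (q ^ ·) h
  simp only [zpow_add₀ hq, zpow_mul, zpow_ofNat] at e
  simp only [bilateralTerm, mul_zpow, div_zpow, zpow_add₀ hu, zpow_sub₀ hv, zpow_add_one₀ hv]
  linear_combination (u ^ a * u ^ b * v ^ a * v / v ^ b) * e

theorem hasSum_int_prod_of_parity {f : ℤ × ℤ → ℂ} {s t : ℂ}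
    (hs : HasSum (fun c : ℤ × ℤ => f (c.1 + c.2, c.1 - c.2)) s)
    (ht : HasSum (fun c : ℤ × ℤ => f (c.1 + c.2, c.1 + 1 - c.2)) t) : HasSum f (s + t) := by
  let g₁ : ℤ × ℤ → ℤ × ℤ := fun c => (c.1 + c.2, c.1 - c.2)
  let g₂ : ℤ × ℤ → ℤ × ℤ := fun c => (c.1 + c.2, c.1 + 1 - c.2)
  have hg₁ : Function.Injective g₁ := fun c d h => by
    simp only [g₁, Prod.mk.injEq] at h
    ext <;> omega
  have hg₂ : Function.Injective g₂ := fun c d h => by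
    simp only [g₂, Prod.mk.injEq] at h
    ext <;> omega
  have hc : IsCompl (Set.range g₁) (Set.range g₂) := by
    constructor
    · rw [Set.disjoint_left]
      rintro _ ⟨c, rfl⟩ ⟨d, h⟩
      simp only [g₁, g₂, Prod.mk.injEq] at h
      omega
    · rw [codisjoint_iff_le_sup]
      rintro ⟨m, n⟩ -
      rcases Int.even_or_odd' (m + n) with ⟨k, hk | hk⟩
      · exact Or.inl ⟨(k, m - k), by simp only [g₁, Prod.mk.injEq]; omega⟩
      · exact Or.inr ⟨(k, m - k), by simp only [g₂, Prod.mk.injEq]; omega⟩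
  exact HasSum.add_isCompl hc (hg₁.hasSum_range_iff.mpr hs) (hg₂.hasSum_range_iff.mpr ht)

theorem hasSum_bilateralTerm_mul {q q' u v : ℂ} (hq : q ≠ 0) (hq1 : ‖q‖ < 1) (hu : u ≠ 0)
    (hq' : q' ≠ 0) (hq1' : ‖q'‖ < 1) (hv : v ≠ 0) :
    HasSum (fun c : ℤ × ℤ => bilateralTerm q u c.1 * bilateralTerm q' v c.2)
      (bilateralSum q u * bilateralSum q' v) :=
  have hsu := summable_bilateralTerm hq hq1 hu
  have hsv := summable_bilateralTerm hq' hq1' hv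
  hsu.hasSum.mul hsv.hasSum (summable_mul_of_summable_norm hsu.norm hsv.norm)

theorem bilateralSum_mul_bilateralSum {q u v : ℂ} (hq : q ≠ 0) (hq1 : ‖q‖ < 1) (hu : u ≠ 0)
    (hv : v ≠ 0) :
    bilateralSum q u * bilateralSum q v =
      bilateralSum (q ^ 2) (u * v) * bilateralSum (q ^ 2) (q * (u / v)) +
        v * (bilateralSum (q ^ 2) (q * (u * v)) * bilateralSum (q ^ 2) (u / v)) := by
  have hq2 : q ^ 2 ≠ 0 := pow_ne_zero 2 hq
  have hq21 : ‖q ^ 2‖ < 1 := by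
    rw [norm_pow]
    exact pow_lt_one₀ (norm_nonneg q) hq1 two_ne_zero
  have huv := mul_ne_zero hu hv
  have hudv := div_ne_zero hu hv
  refine (hasSum_bilateralTerm_mul hq hq1 hu hq hq1 hv).unique (hasSum_int_prod_of_parity ?_ ?_)
  · simp only [bilateralTerm_mul_even hq hu hv]
    exact hasSum_bilateralTerm_mul hq2 hq21 huv hq2 hq21 (mul_ne_zero hq hudv)
  · simp only [bilateralTerm_mul_odd hq hu hv]
    exact (hasSum_bilateralTerm_mul hq2 hq21 (mul_ne_zero hq huv) hq2 hq21 hudv).mul_left v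

/-- The finite product `(p; p)_n`. -/
noncomputable def qFactorial (p : ℂ) (n : ℕ) : ℂ := ∏ i ∈ Finset.range n, (1 - p ^ (i + 1))

/-- The reciprocal of `(p; p)_n`, extended by zero to negative `n`. -/
noncomputable def invQFactorial (p : ℂ) (n : ℤ) : ℂ :=
  if 0 ≤ n then (qFactorial p n.toNat)⁻¹ else 0

theorem one_sub_pow_succ_ne_zero {p : ℂ} (hp : ‖p‖ < 1) (n : ℕ) : 1 - p ^ (n + 1) ≠ 0 := by
  intro h
  have h' : ‖p ^ (n + 1)‖ < 1 := by
    rw [norm_pow]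
    exact pow_lt_one₀ (norm_nonneg p) hp n.succ_ne_zero
  rw [← sub_eq_zero.mp h, norm_one] at h'
  exact lt_irrefl _ h'

theorem qFactorial_ne_zero {p : ℂ} (hp : ‖p‖ < 1) (n : ℕ) : qFactorial p n ≠ 0 :=
  Finset.prod_ne_zero_iff.mpr fun i _ => one_sub_pow_succ_ne_zero hp i

theorem qFactorial_succ (p : ℂ) (n : ℕ) :
    qFactorial p (n + 1) = qFactorial p n * (1 - p ^ (n + 1)) :=
  Finset.prod_range_succ _ _

theorem invQFactorial_natCast (p : ℂ) (n : ℕ) : invQFactorial p n = (qFactorial p n)⁻¹ := by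
  simp [invQFactorial]

theorem invQFactorial_of_neg (p : ℂ) {n : ℤ} (hn : n < 0) : invQFactorial p n = 0 :=
  if_neg hn.not_ge

theorem invQFactorial_eq {p : ℂ} (hp : ‖p‖ < 1) (n : ℤ) :
    invQFactorial p n = (1 - p ^ (n + 1)) * invQFactorial p (n + 1) := by
  rcases lt_trichotomy n (-1) with h | rfl | h
  · rw [invQFactorial_of_neg p (by omega), invQFactorial_of_neg p (by omega), mul_zero]
  · rw [invQFactorial_of_neg p (by omega)]
    simp
  · lift n to ℕ using by omega
    rw [← Nat.cast_add_one, invQFactorial_natCast, invQFactorial_natCast, zpow_natCast,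
      qFactorial_succ]
    have h₁ := one_sub_pow_succ_ne_zero hp n
    have h₂ := qFactorial_ne_zero hp n
    field_simp

theorem exists_tendsto_qFactorial {p : ℂ} (hp : ‖p‖ < 1) :
    ∃ c ≠ 0, Tendsto (qFactorial p) atTop (𝓝 c) := by
  have hs : Summable fun n : ℕ => ‖-p ^ (n + 1)‖ := by
    simpa using (summable_nat_add_iff 1).mpr (summable_geometric_of_lt_one (norm_nonneg _) hp)
  refine ⟨∏' n : ℕ, (1 + -p ^ (n + 1)), tprod_one_add_ne_zero_of_summable (fun n => ?_) hs, ?_⟩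
  · rw [← sub_eq_add_neg]
    exact one_sub_pow_succ_ne_zero hp n
  · refine (multipliable_one_add_of_summable hs).hasProd.tendsto_prod_nat.congr fun n => ?_
    simp only [qFactorial, sub_eq_add_neg]

theorem exists_tendsto_invQFactorial {p : ℂ} (hp : ‖p‖ < 1) :
    ∃ c ≠ 0, Tendsto (fun n : ℕ => invQFactorial p n) atTop (𝓝 c) := by
  obtain ⟨c, hc, h⟩ := exists_tendsto_qFactorial hp
  refine ⟨c⁻¹, inv_ne_zero hc, ?_⟩
  simpa only [invQFactorial_natCast] using h.inv₀ hc

theorem exists_norm_invQFactorial_le {p : ℂ} (hp : ‖p‖ < 1) :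
    ∃ C, 0 ≤ C ∧ ∀ n, ‖invQFactorial p n‖ ≤ C := by
  obtain ⟨c, -, h⟩ := exists_tendsto_invQFactorial hp
  obtain ⟨C, hC⟩ := h.norm.bddAbove_range
  have hC' (n : ℕ) : ‖invQFactorial p n‖ ≤ C := hC ⟨n, rfl⟩
  have hC0 : 0 ≤ C := (norm_nonneg _).trans (hC' 0)
  refine ⟨C, hC0, fun n => ?_⟩
  rcases lt_or_ge n 0 with hn | hn
  · simpa [invQFactorial_of_neg p hn] using hC0
  · lift n to ℕ using hn
    exact hC' n

/-- Finite form of the Jacobi triple product. -/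
theorem hasSum_finite_tripleProduct {p u : ℂ} (hp0 : p ≠ 0) (hp : ‖p‖ < 1) (hu : u ≠ 0)
    (M N : ℕ) :
    HasSum (fun n : ℤ => invQFactorial p (M - n) * invQFactorial p (N + n) * bilateralTerm p u n)
      ((∏ j ∈ Finset.range M, (1 + u * p ^ j)) * (∏ j ∈ Finset.range N, (1 + p ^ (j + 1) * u⁻¹)) /
        qFactorial p (M + N)) := by
  induction M with
  | succ M ih =>
    have hshift := ((Equiv.subRight (1 : ℤ)).hasSum_iff.mpr ih).mul_left (u * p ^ M)
    have h := (ih.add hshift).div_const (1 - p ^ (M + N + 1))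
    have hne := one_sub_pow_succ_ne_zero hp (M + N)
    convert h using 1
    · rfl
    · funext n
      have hr₁ := invQFactorial_eq hp (M - n)
      have hr₂ := invQFactorial_eq hp (N + (n - 1))
      have ht := bilateralTerm_add_one hp0 hu (n - 1)
      simp only [Function.comp_apply, Equiv.subRight_apply]
      rw [sub_add_cancel] at ht
      rw [show (N : ℤ) + (n - 1) + 1 = N + n by ring] at hr₂
      rw [show (M : ℤ) - n + 1 = (M + 1 : ℕ) - n by push_cast; ring] at hr₁
      rw [show (M : ℤ) - (n - 1) = (M + 1 : ℕ) - n by push_cast; ring, hr₁, hr₂, ht,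
        eq_div_iff hne]
      have e₁ : p ^ (((M + 1 : ℕ) : ℤ) - n) * p ^ (n - 1) = p ^ M := by
        rw [← zpow_add₀ hp0, ← zpow_natCast]
        congr 1
        push_cast
        ring
      have e₂ : p ^ (((M + 1 : ℕ) : ℤ) - n) * p ^ ((N : ℤ) + n) = p ^ (M + N + 1) := by
        rw [← zpow_add₀ hp0, ← zpow_natCast]
        congr 1
        push_cast
        ring
      rw [← e₂, ← e₁]
      ring
    · rw [Finset.prod_range_succ, show M + 1 + N = M + N + 1 by ring, qFactorial_succ]
      have := qFactorial_ne_zero hp (M + N)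
      field_simp
  | zero =>
    induction N with
    | zero =>
      convert hasSum_single (0 : ℤ) fun n hn => ?_ using 1
      · simp [bilateralTerm, invQFactorial, qFactorial]
      · rcases hn.lt_or_gt with h | h
        · rw [invQFactorial_of_neg p (n := ((0 : ℕ) : ℤ) + n) (by simpa using h)]
          ring
        · rw [invQFactorial_of_neg p (n := ((0 : ℕ) : ℤ) - n) (by simpa using h)]
          ring
    | succ N ih =>
      have hshift := ((Equiv.addRight (1 : ℤ)).hasSum_iff.mpr ih).mul_left (p ^ (N + 1) * u⁻¹)
      have h := (ih.add hshift).div_const (1 - p ^ (0 + N + 1))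
      have hne := one_sub_pow_succ_ne_zero hp (0 + N)
      convert h using 1
      · rfl
      · funext n
        have hr₁ := invQFactorial_eq hp ((0 : ℕ) - (n + 1))
        have hr₂ := invQFactorial_eq hp (N + n)
        have ht := bilateralTerm_add_one hp0 hu n
        simp only [Function.comp_apply, Equiv.coe_addRight]
        rw [show ((0 : ℕ) : ℤ) - (n + 1) + 1 = (0 : ℕ) - n by ring] at hr₁
        rw [show (N : ℤ) + n + 1 = (N + 1 : ℕ) + n by push_cast; ring] at hr₂
        rw [show (N : ℤ) + (n + 1) = (N + 1 : ℕ) + n by push_cast; ring, hr₁, hr₂, ht,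
          eq_div_iff hne]
        have e₁ : p ^ (((N + 1 : ℕ) : ℤ) + n) = p ^ (N + 1) * p ^ n := by
          rw [zpow_add₀ hp0, zpow_natCast]
        have e₂ : p ^ (((N + 1 : ℕ) : ℤ) + n) * p ^ (((0 : ℕ) : ℤ) - n) = p ^ (0 + N + 1) := by
          rw [← zpow_add₀ hp0, ← zpow_natCast]
          congr 1
          push_cast
          ring
        rw [← e₂, e₁]
        field_simp
        ring
      · rw [Finset.prod_range_succ, ← add_assoc, qFactorial_succ]
        have := qFactorial_ne_zero hp (0 + N)
        field_simp

theorem multipliable_one_sub_mul_pow {p : ℂ} (hp : ‖p‖ < 1) (z : ℂ) :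
    Multipliable fun j : ℕ => 1 - z * p ^ j := by
  have hs : Summable fun j : ℕ => ‖-(z * p ^ j)‖ := by
    simpa using (summable_geometric_of_lt_one (norm_nonneg _) hp).mul_left ‖z‖
  simpa only [sub_eq_add_neg] using multipliable_one_add_of_summable hs

theorem tendsto_theta {p : ℂ} (hp : ‖p‖ < 1) (z : ℂ) :
    Tendsto (fun N : ℕ => (∏ j ∈ Finset.range N, (1 - z * p ^ j)) *
      ∏ j ∈ Finset.range N, (1 - p ^ (j + 1) * z⁻¹)) atTop (𝓝 (theta z p)) := by
  have h₂ : Multipliable fun j : ℕ => 1 - p ^ (j + 1) * z⁻¹ :=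
    (multipliable_one_sub_mul_pow hp (p * z⁻¹)).congr fun j => by ring
  simpa only [Finset.prod_mul_distrib, theta] using
    ((multipliable_one_sub_mul_pow hp z).mul h₂).hasProd.tendsto_prod_nat

theorem tendsto_finite_tripleProduct {p u c : ℂ} (hp0 : p ≠ 0) (hp : ‖p‖ < 1) (hu : u ≠ 0)
    (hc : Tendsto (fun n : ℕ => invQFactorial p n) atTop (𝓝 c)) :
    Tendsto (fun N : ℕ => ∑' n : ℤ,
      invQFactorial p (N - n) * invQFactorial p (N + n) * bilateralTerm p u n) atTop
      (𝓝 (c * c * bilateralSum p u)) := by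
  obtain ⟨C, hC0, hC⟩ := exists_norm_invQFactorial_le hp
  have hlim (n : ℤ) : Tendsto (fun N : ℕ => invQFactorial p (N + n)) atTop (𝓝 c) := by
    have h : Tendsto (fun N : ℕ => ((N : ℤ) + n).toNat) atTop atTop :=
      tendsto_atTop.mpr fun b => by
        filter_upwards [eventually_ge_atTop (b + n.natAbs)] with N hN
        omega
    refine (hc.comp h).congr' ?_
    filter_upwards [eventually_ge_atTop n.natAbs] with N hN
    rw [Function.comp_apply, Int.toNat_of_nonneg (by omega)]
  rw [bilateralSum, ← tsum_mul_left]
  refine tendsto_tsum_of_dominated_convergence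
    ((summable_bilateralTerm hp0 hp hu).norm.mul_left (C * C)) (fun n => ?_)
    (Eventually.of_forall fun N n => ?_)
  · exact ((hlim (-n)).mul (hlim n)).mul_const _
  · rw [norm_mul, norm_mul]
    gcongr <;> exact hC _

/-- The Jacobi triple product, up to a normalization that does not depend on `z`. -/
theorem exists_theta_eq_mul_bilateralSum {p : ℂ} (hp0 : p ≠ 0) (hp : ‖p‖ < 1) :
    ∃ c, ∀ z ≠ 0, theta z p = c * bilateralSum p (-z) := by
  obtain ⟨c, hc0, hc⟩ := exists_tendsto_invQFactorial hp
  refine ⟨c, fun z hz => ?_⟩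
  have h₁ := tendsto_finite_tripleProduct hp0 hp (neg_ne_zero.mpr hz) hc
  have hcc : Tendsto (fun N : ℕ => (qFactorial p (N + N))⁻¹) atTop (𝓝 c) := by
    simp only [invQFactorial_natCast] at hc
    exact hc.comp (tendsto_atTop_mono (fun N => Nat.le_add_left N N) tendsto_id)
  have h₂ := (tendsto_theta hp z).mul hcc
  have h := tendsto_nhds_unique (h₂.congr fun N => ?_) h₁
  · refine mul_right_cancel₀ hc0 ?_
    rw [h]
    ring
  · rw [(hasSum_finite_tripleProduct hp0 hp (neg_ne_zero.mpr hz) N N).tsum_eq, div_eq_mul_inv]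
    simp only [inv_neg, neg_mul, mul_neg, sub_eq_add_neg]

theorem theta_zero_right (z : ℂ) : theta z 0 = 1 - z := by
  rw [theta, tprod_eq_mulSingle 0 fun j hj => by simp [hj]]
  simp

theorem theta_riemann_addition (p x y w z : ℂ) (hp : ‖p‖ < 1)
    (hx : x ≠ 0) (hy : y ≠ 0) (hw : w ≠ 0) (hz : z ≠ 0) :
    theta (x * w) p * theta (x / w) p * theta (y * z) p * theta (y / z) p -
      theta (x * z) p * theta (x / z) p * theta (y * w) p * theta (y / w) p =
    y / w * (theta (x * y) p * theta (x / y) p * theta (w * z) p * theta (w / z) p) := by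
  rcases eq_or_ne p 0 with rfl | hp0
  · simp only [theta_zero_right]
    field_simp
    ring
  · obtain ⟨c, hc⟩ := exists_theta_eq_mul_bilateralSum hp0 hp
    have key (a b : ℂ) (ha : a ≠ 0) (hb : b ≠ 0) : theta (a * b) p * theta (a / b) p =
        c ^ 2 * (bilateralSum (p ^ 2) (a ^ 2) * bilateralSum (p ^ 2) (p * b ^ 2) -
          a / b * (bilateralSum (p ^ 2) (p * a ^ 2) * bilateralSum (p ^ 2) (b ^ 2))) := by
      have hab := mul_ne_zero ha hb
      have hab' := div_ne_zero ha hb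
      have e₁ : -(a * b) * -(a / b) = a ^ 2 := by field_simp
      have e₂ : -(a * b) / -(a / b) = b ^ 2 := by field_simp
      have h := bilateralSum_mul_bilateralSum hp0 hp (neg_ne_zero.mpr hab) (neg_ne_zero.mpr hab')
      rw [e₁, e₂] at h
      rw [hc _ hab, hc _ hab']
      linear_combination c ^ 2 * h
    have hxw := key x w hx hw
    have hyz := key y z hy hz
    have hxz := key x z hx hz
    have hyw := key y w hy hw
    have hxy := key x y hx hy
    have hwz := key w z hw hz
    simp only [mul_assoc] at hxw hyz hxz hyw hxy hwz ⊢
    rw [hyz, hyw, hwz, ← mul_assoc (theta (x * w) p), ← mul_assoc (theta (x * z) p),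
      ← mul_assoc (theta (x * y) p), hxw, hxz, hxy]
    field_simp
    ring
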